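/- For all integers c ≥ 2, k ≥ 3, the inequality ((c+2)/(2k+c))·binom(k+c, c+1) > ((c+2)(c+3)(3c+4)/((k−1)(8ck+12k+5c²+7c)))·binom(k+c, c+2) holds; equivalently, assuming both ((c+2)/(2k+c))·binom(k+c, c+1) ≤ d and d ≤ ((c+2)(c+3)(3c+4)/((k−1)(8ck+12k+5c²+7c)))·binom(k+c, c+2) for some real d leads to 2c(c+1)(c+k+1) ≤ 0, which is impossible. -/

import Mathlib

/-- **Key numerical incompatibility.** For all integers `c ≥ 2`, `k ≥ 3`, the
inequality
`((c+2)/(2k+c))·binom(k+c, c+1)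
  > ((c+2)(c+3)(3c+4)/((k−1)(8ck+12k+5c²+7c)))·binom(k+c, c+2)`
holds; equivalently, assuming both
`((c+2)/(2k+c))·binom(k+c, c+1) ≤ d` and
`d ≤ ((c+2)(c+3)(3c+4)/((k−1)(8ck+12k+5c²+7c)))·binom(k+c, c+2)`
for some real `d` leads to `2c(c+1)(c+k+1) ≤ 0`, which is impossible. -/
theorem degree_bounds_incompatible (c k : ℕ) (hc : 2 ≤ c) (hk : 3 ≤ k) :
    (((c : ℚ) + 2) / (2 * (k : ℚ) + (c : ℚ)) * ((k + c).choose (c + 1) : ℚ) >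
      ((c : ℚ) + 2) * ((c : ℚ) + 3) * (3 * (c : ℚ) + 4) /
          (((k : ℚ) - 1) * (8 * (c : ℚ) * (k : ℚ) + 12 * (k : ℚ)
            + 5 * (c : ℚ) ^ 2 + 7 * (c : ℚ))) *
        ((k + c).choose (c + 2) : ℚ)) ∧
    (∀ d : ℚ,
      ((c : ℚ) + 2) / (2 * (k : ℚ) + (c : ℚ)) * ((k + c).choose (c + 1) : ℚ) ≤ d →
      d ≤ ((c : ℚ) + 2) * ((c : ℚ) + 3) * (3 * (c : ℚ) + 4) /
            (((k : ℚ) - 1) * (8 * (c : ℚ) * (k : ℚ) + 12 * (k : ℚ)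
              + 5 * (c : ℚ) ^ 2 + 7 * (c : ℚ))) *
          ((k + c).choose (c + 2) : ℚ) →
      2 * (c : ℚ) * ((c : ℚ) + 1) * ((c : ℚ) + (k : ℚ) + 1) ≤ 0) := by
  have hB : (0 : ℚ) < ((k + c).choose (c + 1) : ℚ) := by
    exact_mod_cast Nat.choose_pos (by omega)
  have hrec : ((k + c).choose (c + 2) : ℚ) * ((c : ℚ) + 2)
      = ((k + c).choose (c + 1) : ℚ) * ((k : ℚ) - 1) := by
    have h := Nat.choose_succ_right_eq (k + c) (c + 1)
    have e : k + c - (c + 1) = k - 1 := by omega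
    rw [e] at h
    have h' := congrArg (Nat.cast : ℕ → ℚ) h
    push_cast [Nat.cast_sub (show 1 ≤ k by omega)] at h'
    rw [← h']
    ring
  have hc' : (2 : ℚ) ≤ c := by exact_mod_cast hc
  have hk' : (3 : ℚ) ≤ k := by exact_mod_cast hk
  have hk1 : (0 : ℚ) < (k : ℚ) - 1 := by linarith
  have hQ : (0 : ℚ) < 8 * (c : ℚ) * (k : ℚ) + 12 * (k : ℚ)
      + 5 * (c : ℚ) ^ 2 + 7 * (c : ℚ) := by positivity
  have hP : (0 : ℚ) < 2 * (k : ℚ) + (c : ℚ) := by positivity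
  have key : ((c : ℚ) + 2) / (2 * (k : ℚ) + (c : ℚ)) * ((k + c).choose (c + 1) : ℚ) >
      ((c : ℚ) + 2) * ((c : ℚ) + 3) * (3 * (c : ℚ) + 4) /
          (((k : ℚ) - 1) * (8 * (c : ℚ) * (k : ℚ) + 12 * (k : ℚ)
            + 5 * (c : ℚ) ^ 2 + 7 * (c : ℚ))) *
        ((k + c).choose (c + 2) : ℚ) := by
    have e : ((c : ℚ) + 2) * ((c : ℚ) + 3) * (3 * (c : ℚ) + 4) /
          (((k : ℚ) - 1) * (8 * (c : ℚ) * (k : ℚ) + 12 * (k : ℚ)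
            + 5 * (c : ℚ) ^ 2 + 7 * (c : ℚ))) *
        ((k + c).choose (c + 2) : ℚ) = ((c : ℚ) + 3) * (3 * (c : ℚ) + 4) /
          (8 * (c : ℚ) * (k : ℚ) + 12 * (k : ℚ)
            + 5 * (c : ℚ) ^ 2 + 7 * (c : ℚ)) * ((k + c).choose (c + 1) : ℚ) := by
      rw [div_mul_eq_mul_div, div_mul_eq_mul_div,
        div_eq_div_iff (mul_pos hk1 hQ).ne' hQ.ne']
      linear_combination (((c : ℚ) + 3) * (3 * (c : ℚ) + 4) *
        (8 * (c : ℚ) * (k : ℚ) + 12 * (k : ℚ) + 5 * (c : ℚ) ^ 2 + 7 * (c : ℚ))) * hrec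
    rw [e]
    refine mul_lt_mul_of_pos_right ?_ hB
    rw [div_lt_div_iff₀ hQ hP]
    have hpos : (0 : ℚ) < 2 * (c : ℚ) * ((c : ℚ) + 1) * ((c : ℚ) + (k : ℚ) + 1) := by
      positivity
    linarith
  exact ⟨key, fun d h1 h2 => absurd (h1.trans h2) (not_le.mpr key)⟩
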